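/- (Beals-type converse.) Let a : ℝ^{2n} → ℂ be a smooth function all of whose partial derivatives ∂^α a (α ∈ ℕ^{2n}) are polynomially bounded. Suppose that for every multi-index α ∈ ℕ^{2n} there exists a constant C_α > 0 such that for all Schwartz functions u, v ∈ S(ℝⁿ, ℂ), |∫_{ℝ^{2n}} (∂^α a)(x,ξ) · W(u,v)(x,ξ) dx dξ| ≤ C_α · ‖u‖_{L²(ℝⁿ)} · ‖v‖_{L²(ℝⁿ)}. Then every partial derivative ∂^α a is bounded on ℝ^{2n}. -/

import Mathlib

open MeasureTheory

noncomputable section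

/-- Euclidean scalar product on `ℝⁿ`. -/
def dotn {n : ℕ} (p q : Fin n → ℝ) : ℝ := ∑ i, p i * q i

/-- The standard basis vector of `ℝ^{2n} = ℝⁿ × ℝⁿ` indexed by `i : Fin n ⊕ Fin n`. -/
def stdVec {n : ℕ} (i : Fin n ⊕ Fin n) : (Fin n → ℝ) × (Fin n → ℝ) :=
  Sum.elim (fun j => (Pi.single j 1, 0)) (fun j => (0, Pi.single j 1)) i

/-- The partial derivative of `f : ℝ^{2n} → ℂ` in the `i`-th coordinate direction. -/
def pDeriv {n : ℕ} (i : Fin n ⊕ Fin n)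
    (f : (Fin n → ℝ) × (Fin n → ℝ) → ℂ) : (Fin n → ℝ) × (Fin n → ℝ) → ℂ :=
  fun z => fderiv ℝ f z (stdVec i)

/-- The iterated partial derivative `∂^α f` given by a list of coordinate
directions (`L = []` gives `f` itself). -/
def pDerivList {n : ℕ} (L : List (Fin n ⊕ Fin n))
    (f : (Fin n → ℝ) × (Fin n → ℝ) → ℂ) : (Fin n → ℝ) × (Fin n → ℝ) → ℂ :=
  L.foldr (fun i g => pDeriv i g) f

/-- The Wigner transform
`W(u,v)(x,ξ) = (2π)^{−n} ∫ u(x+y/2) conj(v(x−y/2)) e^{−i(y|ξ)} dy`. -/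
def wigner {n : ℕ} (u v : SchwartzMap (Fin n → ℝ) ℂ)
    (z : (Fin n → ℝ) × (Fin n → ℝ)) : ℂ :=
  ((((2 * Real.pi) ^ n)⁻¹ : ℝ) : ℂ) *
    ∫ y : Fin n → ℝ,
      u (z.1 + (2⁻¹ : ℝ) • y) * (starRingEnd ℂ) (v (z.1 - (2⁻¹ : ℝ) • y)) *
        Complex.exp (-Complex.I * ((dotn y z.2 : ℝ) : ℂ))

open Complex Function

lemma hasTemperateGrowth_dotn_self (n : ℕ) :
    HasTemperateGrowth (fun x : Fin n → ℝ => -(dotn x x / 2)) := by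
  have hp (i : Fin n) : HasTemperateGrowth (fun x : Fin n → ℝ => x i) :=
    (ContinuousLinearMap.proj (R := ℝ) (φ := fun _ : Fin n => ℝ) i).hasTemperateGrowth
  have hs : HasTemperateGrowth (fun x : Fin n → ℝ => dotn x x) :=
    HasTemperateGrowth.sum fun i _ => (hp i).mul (hp i)
  have hm := (hs.mul (HasTemperateGrowth.const (E := Fin n → ℝ) (2⁻¹ : ℝ))).neg
  exact hm

lemma sq_norm_le_dotn_self {n : ℕ} (x : Fin n → ℝ) : ‖x‖ ^ 2 ≤ dotn x x := by
  have h0 : 0 ≤ dotn x x := Finset.sum_nonneg fun i _ => mul_self_nonneg _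
  have : ‖x‖ ≤ √(dotn x x) := by
    refine (pi_norm_le_iff_of_nonneg (Real.sqrt_nonneg _)).2 fun i => ?_
    refine Real.le_sqrt_of_sq_le ?_
    rw [Real.norm_eq_abs, sq_abs, sq]
    exact Finset.single_le_sum (f := fun i => x i * x i) (fun i _ => mul_self_nonneg _)
      (Finset.mem_univ i)
  calc ‖x‖ ^ 2 ≤ √(dotn x x) ^ 2 := by gcongr
    _ = _ := Real.sq_sqrt h0

/-- The standard Gaussian decays faster than any power. -/
lemma exp_neg_dotn_self_le {n : ℕ} (N : ℕ) (x : Fin n → ℝ) :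
    (1 + ‖x‖) ^ N * Real.exp (-(dotn x x / 2)) ≤ N.factorial * Real.exp 2 := by
  have h1 := Real.pow_div_factorial_le_exp (1 + ‖x‖) (by positivity) N
  rw [div_le_iff₀ (by positivity)] at h1
  calc (1 + ‖x‖) ^ N * Real.exp (-(dotn x x / 2))
      ≤ (Real.exp (1 + ‖x‖) * N.factorial) * Real.exp (-(dotn x x / 2)) := by gcongr
    _ = N.factorial * Real.exp (1 + ‖x‖ - dotn x x / 2) := by
        rw [sub_eq_add_neg, Real.exp_add (1 + ‖x‖)]; ring
    _ ≤ _ := by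
        gcongr
        nlinarith [sq_norm_le_dotn_self x, sq_nonneg (‖x‖ - 1)]

lemma contDiff_exp_neg_dotn_self (n : ℕ) :
    ContDiff ℝ (⊤ : ℕ∞) (fun x : Fin n → ℝ => Real.exp (-(dotn x x / 2))) :=
  Real.contDiff_exp.comp (hasTemperateGrowth_dotn_self n).1

lemma decay_exp_neg_dotn_self {n : ℕ} (k m : ℕ) : ∃ C : ℝ, ∀ x : Fin n → ℝ,
    ‖x‖ ^ k * ‖iteratedFDeriv ℝ m (fun x : Fin n → ℝ => Real.exp (-(dotn x x / 2))) x‖ ≤ C := by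
  have hq := hasTemperateGrowth_dotn_self n
  obtain ⟨l, C, hC, h⟩ := hq.norm_iteratedFDeriv_le_uniform m
  refine ⟨m.factorial * (C + 1) ^ m * ((k + l * m).factorial * Real.exp 2), fun x => ?_⟩
  have h1 : 1 ≤ (C + 1) * (1 + ‖x‖) ^ l := by
    have : 1 ≤ (1 + ‖x‖) ^ l := one_le_pow₀ (by linarith [norm_nonneg x])
    nlinarith
  have key := norm_iteratedFDeriv_comp_le (𝕜 := ℝ) (n := m) (N := (⊤ : ℕ∞))
    (g := Real.exp) (f := fun x : Fin n → ℝ => -(dotn x x / 2))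
    (C := Real.exp (-(dotn x x / 2))) (D := (C + 1) * (1 + ‖x‖) ^ l)
    Real.contDiff_exp hq.1 (mod_cast le_top) x
    (fun i _ => by
      rw [norm_iteratedFDeriv_eq_norm_iteratedDeriv, iteratedDeriv_eq_iterate, Real.iter_deriv_exp,
        Real.norm_eq_abs, Real.abs_exp])
    (fun i hi him => by
      calc _ ≤ C * (1 + ‖x‖) ^ l := h i him x
        _ ≤ (C + 1) * (1 + ‖x‖) ^ l := by gcongr; linarith
        _ ≤ _ := le_self_pow₀ h1 (by omega))
  calc _ ≤ (1 + ‖x‖) ^ k *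
      (m.factorial * Real.exp (-(dotn x x / 2)) * ((C + 1) * (1 + ‖x‖) ^ l) ^ m) := by
        gcongr
        · linarith
        · exact key
    _ = m.factorial * (C + 1) ^ m *
        ((1 + ‖x‖) ^ (k + l * m) * Real.exp (-(dotn x x / 2))) := by
        rw [mul_pow, ← pow_mul, pow_add]; ring
    _ ≤ _ := mul_le_mul_of_nonneg_left (exp_neg_dotn_self_le _ x) (by positivity)

/-- The standard Gaussian `exp (-|x|²/2)` on `ℝⁿ` as a Schwartz function. -/
def gaussianSchwartz (n : ℕ) : SchwartzMap (Fin n → ℝ) ℂ :=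
  SchwartzMap.postcompCLM (𝕜 := ℝ) Complex.ofRealCLM
    { toFun := fun x => Real.exp (-(dotn x x / 2))
      smooth' := contDiff_exp_neg_dotn_self n
      decay' := decay_exp_neg_dotn_self }

lemma gaussianSchwartz_apply {n : ℕ} (x : Fin n → ℝ) :
    gaussianSchwartz n x = (Real.exp (-(dotn x x / 2)) : ℝ) := rfl

lemma hasTemperateGrowth_cexp_I_mul :
    HasTemperateGrowth (fun t : ℝ => cexp (I * t)) := by
  have hd (k : ℕ) : iteratedDeriv k (fun t : ℝ => cexp (I * t)) =
      fun t : ℝ => I ^ k * cexp (I * t) := by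
    induction k with
    | zero => simp
    | succ k ih =>
      rw [iteratedDeriv_succ, ih]
      ext t
      have h1 : HasDerivAt (fun t : ℝ => I * (t : ℂ)) (I * 1) t :=
        (Complex.ofRealCLM.hasDerivAt (x := t)).const_mul I
      rw [(h1.cexp.const_mul (I ^ k)).deriv]
      ring
  refine ⟨(contDiff_const.mul Complex.ofRealCLM.contDiff).cexp, fun k => ⟨0, 1, fun t => ?_⟩⟩
  rw [norm_iteratedFDeriv_eq_norm_iteratedDeriv, hd]
  simp [mul_comm I, Complex.norm_exp_ofReal_mul_I]

lemma hasTemperateGrowth_dotn {n : ℕ} (r : Fin n → ℝ) :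
    HasTemperateGrowth (fun x : Fin n → ℝ => dotn r x) :=
  HasTemperateGrowth.sum fun i _ => (HasTemperateGrowth.const (r i)).mul
    (ContinuousLinearMap.proj (R := ℝ) (φ := fun _ : Fin n => ℝ) i).hasTemperateGrowth

/-- The Gaussian translated to position `s` and momentum `r` (a coherent state). -/
lemma exists_coherentState {n : ℕ} (s r : Fin n → ℝ) : ∃ u : SchwartzMap (Fin n → ℝ) ℂ,
    ∀ x, u x = gaussianSchwartz n (x - s) * cexp (I * (dotn r x : ℝ)) := by
  have h := (hasTemperateGrowth_cexp_I_mul).comp (hasTemperateGrowth_dotn r)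
  refine ⟨SchwartzMap.smulLeftCLM ℂ ((fun t : ℝ => cexp (I * t)) ∘ fun x => dotn r x)
    (SchwartzMap.compSubConstCLM ℝ s (gaussianSchwartz n)),
    fun x => ?_⟩
  rw [SchwartzMap.smulLeftCLM_apply_apply h]
  simp [mul_comm]

lemma norm_cexp_I_mul_ofReal (t : ℝ) : ‖cexp (I * t)‖ = 1 := by
  rw [mul_comm, Complex.norm_exp_ofReal_mul_I]

lemma integral_norm_sq_coherentState {n : ℕ} {s r : Fin n → ℝ} {u : SchwartzMap (Fin n → ℝ) ℂ}
    (hu : ∀ x, u x = gaussianSchwartz n (x - s) * cexp (I * (dotn r x : ℝ))) :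
    ∫ x, ‖u x‖ ^ 2 = ∫ x, ‖gaussianSchwartz n x‖ ^ 2 := by
  simp_rw [hu, norm_mul, norm_cexp_I_mul_ofReal, mul_one]
  exact integral_sub_right_eq_self (fun x => ‖gaussianSchwartz n x‖ ^ 2) s

/-- The scalar product on phase space `ℝ^{2n}`. -/
def phasePair {n : ℕ} (ζ X : (Fin n → ℝ) × (Fin n → ℝ)) : ℝ :=
  dotn ζ.1 X.1 + dotn ζ.2 X.2

/-- The character `X ↦ exp (i⟨ζ, X⟩)` of phase space. -/
def phaseChar {n : ℕ} (ζ X : (Fin n → ℝ) × (Fin n → ℝ)) : ℂ :=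
  cexp (I * (phasePair ζ X : ℝ))

/-- The Gaussian `exp (-|x|² - |ξ|²)` on phase space. -/
def phaseGaussian {n : ℕ} (X : (Fin n → ℝ) × (Fin n → ℝ)) : ℂ :=
  (Real.exp (-(dotn X.1 X.1) - dotn X.2 X.2) : ℝ)

lemma dotn_add_left {n : ℕ} (p q r : Fin n → ℝ) : dotn (p + q) r = dotn p r + dotn q r := by
  simp [dotn, add_mul, Finset.sum_add_distrib]

lemma dotn_add_right {n : ℕ} (p q r : Fin n → ℝ) : dotn r (p + q) = dotn r p + dotn r q := by
  simp [dotn, mul_add, Finset.sum_add_distrib]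

lemma dotn_smul_left {n : ℕ} (c : ℝ) (p r : Fin n → ℝ) : dotn (c • p) r = c * dotn p r := by
  simp [dotn, mul_assoc, Finset.mul_sum]

lemma dotn_smul_right {n : ℕ} (c : ℝ) (p r : Fin n → ℝ) : dotn r (c • p) = c * dotn r p := by
  simp [dotn, mul_left_comm, Finset.mul_sum]

lemma dotn_neg_left {n : ℕ} (p r : Fin n → ℝ) : dotn (-p) r = -dotn p r := by
  simp [dotn]

lemma dotn_neg_right {n : ℕ} (p r : Fin n → ℝ) : dotn r (-p) = -dotn r p := by
  simp [dotn]

lemma dotn_sub_left {n : ℕ} (p q r : Fin n → ℝ) : dotn (p - q) r = dotn p r - dotn q r := by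
  rw [sub_eq_add_neg, dotn_add_left, dotn_neg_left, ← sub_eq_add_neg]

lemma dotn_sub_right {n : ℕ} (p q r : Fin n → ℝ) : dotn r (p - q) = dotn r p - dotn r q := by
  rw [sub_eq_add_neg, dotn_add_right, dotn_neg_right, ← sub_eq_add_neg]

lemma dotn_comm {n : ℕ} (p q : Fin n → ℝ) : dotn p q = dotn q p := by
  simp [dotn, mul_comm]

/-- The (positive) value at the origin of the Wigner transform of the standard Gaussian. -/
def gaussianWignerConst (n : ℕ) : ℂ :=
  ((((2 * Real.pi) ^ n)⁻¹ : ℝ) : ℂ) * ((Real.pi : ℂ) / (4⁻¹ : ℂ)) ^ ((n : ℂ) / 2)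

lemma gaussianWignerConst_ne_zero (n : ℕ) : gaussianWignerConst n ≠ 0 := by
  have hpi : (Real.pi : ℂ) ≠ 0 := by exact_mod_cast Real.pi_ne_zero
  refine mul_ne_zero ?_ ?_
  · exact Complex.ofReal_ne_zero.2 (by positivity)
  · rw [Ne, Complex.cpow_eq_zero_iff]
    simp [hpi]

/-- The Wigner transform of the standard Gaussian. -/
lemma wigner_gaussianSchwartz {n : ℕ} (z : (Fin n → ℝ) × (Fin n → ℝ)) :
    wigner (gaussianSchwartz n) (gaussianSchwartz n) z =
      gaussianWignerConst n * phaseGaussian z := by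
  have h := GaussianFourier.integral_cexp_neg_mul_sum_add (ι := Fin n) (b := (4⁻¹ : ℂ))
    (by norm_num) (fun i => -I * (z.2 i : ℂ))
  have hint (y : Fin n → ℝ) : gaussianSchwartz n (z.1 + (2⁻¹ : ℝ) • y) *
      (starRingEnd ℂ) (gaussianSchwartz n (z.1 - (2⁻¹ : ℝ) • y)) *
        cexp (-I * ((dotn y z.2 : ℝ) : ℂ)) = (Real.exp (-dotn z.1 z.1) : ℝ) *
        cexp (-4⁻¹ * ∑ i, (y i : ℂ) ^ 2 + ∑ i, -I * (z.2 i : ℂ) * y i) := by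
    rw [gaussianSchwartz_apply, gaussianSchwartz_apply, Complex.conj_ofReal,
      ← Complex.ofReal_mul, ← Real.exp_add, Complex.ofReal_exp, Complex.ofReal_exp,
      ← Complex.exp_add, ← Complex.exp_add]
    congr 1
    have e1 : (∑ i, (y i : ℂ) ^ 2) = (dotn y y : ℝ) := by
      simp [dotn, sq]
    have e2 : (∑ i, -I * (z.2 i : ℂ) * y i) = -I * (dotn y z.2 : ℝ) := by
      simp only [dotn, Complex.ofReal_sum, Complex.ofReal_mul, Finset.mul_sum]
      exact Finset.sum_congr rfl fun i _ => by ring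
    rw [e1, e2]
    simp only [dotn_add_left, dotn_add_right, dotn_sub_left, dotn_sub_right, dotn_smul_left,
      dotn_smul_right]
    rw [dotn_comm z.1 y]
    push_cast
    ring
  rw [wigner]
  simp_rw [hint]
  rw [integral_const_mul, h, gaussianWignerConst, phaseGaussian, Fintype.card_fin]
  have e3 : (∑ i, (-I * (z.2 i : ℂ)) ^ 2) / (4 * 4⁻¹) = ((-dotn z.2 z.2 : ℝ) : ℂ) := by
    simp [dotn, mul_pow]
    simp [sq]
  rw [e3, sub_eq_add_neg, Real.exp_add, Complex.ofReal_mul, ← Complex.ofReal_exp]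
  ring

/-- Covariance: Wigner transform of a pair of coherent states. -/
lemma wigner_coherentState {n : ℕ} (Z ζ : (Fin n → ℝ) × (Fin n → ℝ))
    {u v : SchwartzMap (Fin n → ℝ) ℂ}
    (hu : ∀ x, u x = gaussianSchwartz n (x - (Z.1 - (2⁻¹ : ℝ) • ζ.2)) *
      cexp (I * (dotn (Z.2 + (2⁻¹ : ℝ) • ζ.1) x : ℝ)))
    (hv : ∀ x, v x = gaussianSchwartz n (x - (Z.1 + (2⁻¹ : ℝ) • ζ.2)) *
      cexp (I * (dotn (Z.2 - (2⁻¹ : ℝ) • ζ.1) x : ℝ)))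
    (X : (Fin n → ℝ) × (Fin n → ℝ)) :
    wigner u v X = gaussianWignerConst n * cexp (-I * (dotn ζ.2 Z.2 : ℝ)) *
      (phaseGaussian (X - Z) * phaseChar ζ X) := by
  have h := wigner_gaussianSchwartz (X - Z)
  rw [mul_mul_mul_comm, ← h, wigner, wigner, mul_assoc]
  congr 1
  rw [← integral_mul_const]
  refine Eq.trans ?_ (integral_add_right_eq_self _ ζ.2)
  refine integral_congr_ae (Filter.Eventually.of_forall fun y => ?_)
  have e1 : X.1 + (2⁻¹ : ℝ) • y - (Z.1 - (2⁻¹ : ℝ) • ζ.2) =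
      (X - Z).1 + (2⁻¹ : ℝ) • (y + ζ.2) := by
    rw [Prod.fst_sub, smul_add]; abel
  have e2 : X.1 - (2⁻¹ : ℝ) • y - (Z.1 + (2⁻¹ : ℝ) • ζ.2) =
      (X - Z).1 - (2⁻¹ : ℝ) • (y + ζ.2) := by
    rw [Prod.fst_sub, smul_add]; abel
  have hconj (t : ℝ) : (starRingEnd ℂ) (cexp (I * t)) = cexp (-I * t) := by
    rw [← Complex.exp_conj]; simp
  have e3 : cexp (I * (dotn (Z.2 + (2⁻¹ : ℝ) • ζ.1) (X.1 + (2⁻¹ : ℝ) • y) : ℝ)) *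
      cexp (-I * (dotn (Z.2 - (2⁻¹ : ℝ) • ζ.1) (X.1 - (2⁻¹ : ℝ) • y) : ℝ)) *
        cexp (-I * (dotn y X.2 : ℝ)) =
      cexp (-I * (dotn (y + ζ.2) (X - Z).2 : ℝ)) *
        (cexp (-I * (dotn ζ.2 Z.2 : ℝ)) * phaseChar ζ X) := by
    rw [phaseChar, phasePair, Prod.snd_sub]
    simp only [← Complex.exp_add]
    congr 1
    simp only [dotn_add_left, dotn_add_right, dotn_sub_left, dotn_sub_right, dotn_smul_left,
      dotn_smul_right]
    rw [dotn_comm Z.2 y]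
    push_cast
    ring
  simp only [hu, hv, map_mul, e1, e2, hconj]
  calc _ = (gaussianSchwartz n ((X - Z).1 + (2⁻¹ : ℝ) • (y + ζ.2)) *
        (starRingEnd ℂ) (gaussianSchwartz n ((X - Z).1 - (2⁻¹ : ℝ) • (y + ζ.2)))) *
        (cexp (I * (dotn (Z.2 + (2⁻¹ : ℝ) • ζ.1) (X.1 + (2⁻¹ : ℝ) • y) : ℝ)) *
      cexp (-I * (dotn (Z.2 - (2⁻¹ : ℝ) • ζ.1) (X.1 - (2⁻¹ : ℝ) • y) : ℝ)) *
        cexp (-I * (dotn y X.2 : ℝ))) := by ring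
    _ = _ := by rw [e3]; ring

instance isAddHaarMeasure_volume_phaseSpace (n : ℕ) :
    (volume : Measure ((Fin n → ℝ) × (Fin n → ℝ))).IsAddHaarMeasure :=
  Measure.prod.instIsAddHaarMeasure _ _

lemma exists_bound_integral_phaseGaussian {n : ℕ} {b : (Fin n → ℝ) × (Fin n → ℝ) → ℂ}
    (hb : ∃ C > (0 : ℝ), ∀ u v : SchwartzMap (Fin n → ℝ) ℂ,
      ‖∫ z : (Fin n → ℝ) × (Fin n → ℝ), b z * wigner u v z‖ ≤
        C * Real.sqrt (∫ x : Fin n → ℝ, ‖u x‖ ^ 2) *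
          Real.sqrt (∫ x : Fin n → ℝ, ‖v x‖ ^ 2)) :
    ∃ C : ℝ, ∀ Z ζ : (Fin n → ℝ) × (Fin n → ℝ),
      ‖∫ X, b X * (phaseGaussian (X - Z) * phaseChar ζ X)‖ ≤ C := by
  obtain ⟨C, -, hC⟩ := hb
  set N := Real.sqrt (∫ x : Fin n → ℝ, ‖gaussianSchwartz n x‖ ^ 2) with hN
  refine ⟨‖gaussianWignerConst n‖⁻¹ * (C * N * N), fun Z ζ => ?_⟩
  obtain ⟨u, hu⟩ := exists_coherentState (Z.1 - (2⁻¹ : ℝ) • ζ.2) (Z.2 + (2⁻¹ : ℝ) • ζ.1)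
  obtain ⟨v, hv⟩ := exists_coherentState (Z.1 + (2⁻¹ : ℝ) • ζ.2) (Z.2 - (2⁻¹ : ℝ) • ζ.1)
  have h := hC u v
  rw [integral_norm_sq_coherentState hu, integral_norm_sq_coherentState hv, ← hN] at h
  have hw (X : (Fin n → ℝ) × (Fin n → ℝ)) : b X * wigner u v X =
      (gaussianWignerConst n * cexp (-I * (dotn ζ.2 Z.2 : ℝ))) *
        (b X * (phaseGaussian (X - Z) * phaseChar ζ X)) := by
    rw [wigner_coherentState Z ζ hu hv]; ring
  simp_rw [hw] at h
  rw [integral_const_mul, norm_mul, norm_mul, neg_mul, ← mul_neg, ← Complex.ofReal_neg,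
    norm_cexp_I_mul_ofReal, mul_one] at h
  rwa [← div_eq_inv_mul, le_div_iff₀' (norm_pos_iff.2 (gaussianWignerConst_ne_zero n))]

lemma phasePair_add_left {n : ℕ} (ζ η X : (Fin n → ℝ) × (Fin n → ℝ)) :
    phasePair (ζ + η) X = phasePair ζ X + phasePair η X := by
  simp only [phasePair, Prod.fst_add, Prod.snd_add, dotn_add_left]; ring

lemma phasePair_sub_right {n : ℕ} (ζ X Y : (Fin n → ℝ) × (Fin n → ℝ)) :
    phasePair ζ (X - Y) = phasePair ζ X - phasePair ζ Y := by
  simp only [phasePair, Prod.fst_sub, Prod.snd_sub, dotn_sub_right]; ring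

lemma norm_phaseChar {n : ℕ} (ζ X : (Fin n → ℝ) × (Fin n → ℝ)) : ‖phaseChar ζ X‖ = 1 :=
  norm_cexp_I_mul_ofReal _

lemma contDiff_phasePair (n : ℕ) :
    ContDiff ℝ (⊤ : ℕ∞) (fun p : ((Fin n → ℝ) × (Fin n → ℝ)) × ((Fin n → ℝ) × (Fin n → ℝ)) =>
      phasePair p.1 p.2) := by
  unfold phasePair dotn
  fun_prop

lemma contDiff_phaseChar {n : ℕ} (ζ : (Fin n → ℝ) × (Fin n → ℝ)) :
    ContDiff ℝ (⊤ : ℕ∞) (phaseChar ζ) :=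
  (contDiff_const.mul (Complex.ofRealCLM.contDiff.comp
    ((contDiff_phasePair n).comp (contDiff_const.prodMk contDiff_id)))).cexp

lemma continuous_phaseChar_uncurry (n : ℕ) :
    Continuous (fun p : ((Fin n → ℝ) × (Fin n → ℝ)) × ((Fin n → ℝ) × (Fin n → ℝ)) =>
      phaseChar p.1 p.2) := by
  have := (contDiff_phasePair n).continuous
  unfold phaseChar
  fun_prop

lemma contDiff_phaseGaussian (n : ℕ) :
    ContDiff ℝ (⊤ : ℕ∞) (phaseGaussian (n := n)) := by
  refine Complex.ofRealCLM.contDiff.comp (Real.contDiff_exp.comp ?_)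
  unfold dotn
  fun_prop

lemma phaseGaussian_ne_zero {n : ℕ} (X : (Fin n → ℝ) × (Fin n → ℝ)) : phaseGaussian X ≠ 0 :=
  Complex.ofReal_ne_zero.2 (Real.exp_pos _).ne'

lemma norm_phaseGaussian_le {n : ℕ} (N : ℕ) : ∃ C : ℝ, 0 ≤ C ∧
    ∀ X : (Fin n → ℝ) × (Fin n → ℝ), (1 + ‖X‖) ^ N * ‖phaseGaussian X‖ ≤ C := by
  refine ⟨(N.factorial * Real.exp 2) * (N.factorial * Real.exp 2), by positivity, fun X => ?_⟩
  have h0 (x : Fin n → ℝ) : 0 ≤ dotn x x := Finset.sum_nonneg fun i _ => mul_self_nonneg _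
  rw [phaseGaussian, Complex.norm_real, Real.norm_eq_abs, Real.abs_exp]
  calc (1 + ‖X‖) ^ N * Real.exp (-(dotn X.1 X.1) - dotn X.2 X.2)
      ≤ ((1 + ‖X.1‖) * (1 + ‖X.2‖)) ^ N *
        Real.exp (-(dotn X.1 X.1 / 2) + -(dotn X.2 X.2 / 2)) := by
        gcongr
        · rw [Prod.norm_def]
          rcases max_choice ‖X.1‖ ‖X.2‖ with h | h <;> rw [h] <;>
            nlinarith [norm_nonneg X.1, norm_nonneg X.2]
        · linarith [h0 X.1, h0 X.2]
    _ = ((1 + ‖X.1‖) ^ N * Real.exp (-(dotn X.1 X.1 / 2))) *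
        ((1 + ‖X.2‖) ^ N * Real.exp (-(dotn X.2 X.2 / 2))) := by
        rw [Real.exp_add, mul_pow]; ring
    _ ≤ _ := mul_le_mul (exp_neg_dotn_self_le N _) (exp_neg_dotn_self_le N _) (by positivity)
        (by positivity)

lemma integrable_mul_phaseGaussian {n : ℕ} {b : (Fin n → ℝ) × (Fin n → ℝ) → ℂ}
    (hbc : Continuous b) (hb : ∃ (C : ℝ) (m : ℕ), ∀ z, ‖b z‖ ≤ C * (1 + ‖z‖) ^ m)
    (Z : (Fin n → ℝ) × (Fin n → ℝ)) :
    Integrable (fun X => b X * phaseGaussian (X - Z)) := by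
  obtain ⟨C, m, hC⟩ := hb
  have hC0 : 0 ≤ C := by simpa using (norm_nonneg _).trans (hC 0)
  set r := Module.finrank ℝ ((Fin n → ℝ) × (Fin n → ℝ)) + 1 with hr
  obtain ⟨K, hK0, hK⟩ := norm_phaseGaussian_le (n := n) (m + r)
  have hint : Integrable (fun X : (Fin n → ℝ) × (Fin n → ℝ) => (1 + ‖X‖) ^ (-(r : ℝ))) :=
    integrable_one_add_norm (by rw [hr]; push_cast; linarith)
  refine ((hint.comp_sub_right Z).const_mul (C * (1 + ‖Z‖) ^ m * K)).mono'
    (hbc.mul ((contDiff_phaseGaussian n).continuous.comp (continuous_id.sub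
      continuous_const))).aestronglyMeasurable (Filter.Eventually.of_forall fun X => ?_)
  have h1 : 1 + ‖X‖ ≤ (1 + ‖Z‖) * (1 + ‖X - Z‖) := by
    have : ‖X‖ ≤ ‖Z‖ + ‖X - Z‖ := by simpa using norm_add_le Z (X - Z)
    nlinarith [norm_nonneg Z, norm_nonneg (X - Z)]
  rw [Real.rpow_neg (by positivity), Real.rpow_natCast, ← div_eq_mul_inv,
    le_div_iff₀ (by positivity), norm_mul]
  calc ‖b X‖ * ‖phaseGaussian (X - Z)‖ * (1 + ‖X - Z‖) ^ r
      ≤ C * ((1 + ‖Z‖) * (1 + ‖X - Z‖)) ^ m * ‖phaseGaussian (X - Z)‖ *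
        (1 + ‖X - Z‖) ^ r := by
        gcongr
        exact (hC X).trans (by gcongr)
    _ = C * (1 + ‖Z‖) ^ m * ((1 + ‖X - Z‖) ^ (m + r) * ‖phaseGaussian (X - Z)‖) := by
        rw [mul_pow, pow_add]; ring
    _ ≤ _ := by gcongr; exact hK _

/-- Phase space as a Euclidean space. -/
def phaseEuclidean (n : ℕ) :
    EuclideanSpace ℝ (Fin n ⊕ Fin n) ≃L[ℝ] (Fin n → ℝ) × (Fin n → ℝ) :=
  (EuclideanSpace.equiv (Fin n ⊕ Fin n) ℝ).trans
    (ContinuousLinearEquiv.sumPiEquivProdPi ℝ (Fin n) (Fin n) fun _ => ℝ)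

lemma measurePreserving_phaseEuclidean (n : ℕ) : MeasurePreserving (phaseEuclidean n) :=
  (measurePreserving_sumPiEquivProdPi (fun _ : Fin n ⊕ Fin n => (volume : Measure ℝ))).comp
    (PiLp.volume_preserving_ofLp (Fin n ⊕ Fin n))

lemma inner_eq_phasePair {n : ℕ} (v w : EuclideanSpace ℝ (Fin n ⊕ Fin n)) :
    inner ℝ v w = phasePair (phaseEuclidean n w) (phaseEuclidean n v) := by
  rw [PiLp.inner_apply, Fintype.sum_sum_type]
  rfl

/-- The Fourier transform on phase space. -/
def phaseFourier {n : ℕ} (f : (Fin n → ℝ) × (Fin n → ℝ) → ℂ)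
    (w : (Fin n → ℝ) × (Fin n → ℝ)) : ℂ :=
  ∫ X, f X * phaseChar (-(2 * Real.pi) • w) X

lemma phasePair_smul_left {n : ℕ} (c : ℝ) (ζ X : (Fin n → ℝ) × (Fin n → ℝ)) :
    phasePair (c • ζ) X = c * phasePair ζ X := by
  simp only [phasePair, Prod.smul_fst, Prod.smul_snd, dotn_smul_left]; ring

lemma integral_comp_phaseEuclidean {n : ℕ} (f : (Fin n → ℝ) × (Fin n → ℝ) → ℂ) :
    ∫ v, f (phaseEuclidean n v) = ∫ X, f X :=
  (measurePreserving_phaseEuclidean n).integral_comp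
    (phaseEuclidean n).toHomeomorph.measurableEmbedding f

lemma phaseFourier_phaseEuclidean {n : ℕ} (f : (Fin n → ℝ) × (Fin n → ℝ) → ℂ)
    (w : EuclideanSpace ℝ (Fin n ⊕ Fin n)) :
    phaseFourier f (phaseEuclidean n w) =
      FourierTransform.fourier (fun v => f (phaseEuclidean n v)) w := by
  rw [phaseFourier, ← integral_comp_phaseEuclidean, Real.fourier_eq']
  refine integral_congr_ae (Filter.Eventually.of_forall fun v => ?_)
  simp only [phaseChar, phasePair_smul_left, inner_eq_phasePair, smul_eq_mul]
  rw [mul_comm, mul_comm I]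
  simp

/-- Fourier inversion for test functions on phase space. -/
lemma phaseFourier_inversion {n : ℕ} {f : (Fin n → ℝ) × (Fin n → ℝ) → ℂ}
    (hf : ContDiff ℝ (⊤ : ℕ∞) f) (hc : HasCompactSupport f) :
    Integrable (phaseFourier f) ∧
      ∀ X, f X = ∫ w, phaseFourier f w * phaseChar ((2 * Real.pi) • w) X := by
  set g : EuclideanSpace ℝ (Fin n ⊕ Fin n) → ℂ := fun v => f (phaseEuclidean n v) with hg
  have hgc : HasCompactSupport g := hc.comp_homeomorph (phaseEuclidean n).toHomeomorph
  set S := hgc.toSchwartzMap (hf.comp (phaseEuclidean n).contDiff) with hS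
  have hSg : (S : EuclideanSpace ℝ (Fin n ⊕ Fin n) → ℂ) = g := rfl
  have hFint : Integrable (FourierTransform.fourier g) := by
    rw [← hSg, ← SchwartzMap.fourier_coe]
    exact SchwartzMap.integrable _
  have hint : Integrable (phaseFourier f) := by
    rw [← (measurePreserving_phaseEuclidean n).integrable_comp_emb
      (phaseEuclidean n).toHomeomorph.measurableEmbedding]
    exact hFint.congr (Filter.Eventually.of_forall fun w =>
      (phaseFourier_phaseEuclidean f w).symm)
  refine ⟨hint, fun X => ?_⟩
  have hinv := S.continuous.fourierInv_fourier_eq S.integrable hFint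
  rw [hSg] at hinv
  have h := congrFun hinv ((phaseEuclidean n).symm X)
  rw [hg] at h
  simp only [ContinuousLinearEquiv.apply_symm_apply] at h
  rw [← h, ← integral_comp_phaseEuclidean, Real.fourierInv_eq']
  refine integral_congr_ae (Filter.Eventually.of_forall fun w => ?_)
  simp only [phaseFourier_phaseEuclidean, inner_eq_phasePair, phaseChar, phasePair_smul_left,
    smul_eq_mul, ContinuousLinearEquiv.apply_symm_apply]
  rw [mul_comm, mul_comm I]
  congr 5
  simp only [phasePair, dotn_comm]

lemma continuous_phaseChar_mul {n : ℕ} (ζ Z : (Fin n → ℝ) × (Fin n → ℝ)) :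
    Continuous (fun p : ((Fin n → ℝ) × (Fin n → ℝ)) × ((Fin n → ℝ) × (Fin n → ℝ)) =>
      phaseChar ζ p.1 * phaseChar ((2 * Real.pi) • p.2) (p.1 - Z)) := by
  have h1 := (contDiff_phaseChar ζ).continuous
  have h2 : Continuous (fun p : ((Fin n → ℝ) × (Fin n → ℝ)) × ((Fin n → ℝ) × (Fin n → ℝ)) =>
      ((2 * Real.pi) • p.2, p.1 - Z)) := by fun_prop
  exact (h1.comp continuous_fst).mul ((continuous_phaseChar_uncurry n).comp h2)

lemma exists_bound_integral_testFunction {n : ℕ} {b φ : (Fin n → ℝ) × (Fin n → ℝ) → ℂ}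
    (hbc : Continuous b) (hbp : ∃ (C : ℝ) (m : ℕ), ∀ z, ‖b z‖ ≤ C * (1 + ‖z‖) ^ m)
    (hb : ∃ C : ℝ, ∀ Z ζ : (Fin n → ℝ) × (Fin n → ℝ),
      ‖∫ X, b X * (phaseGaussian (X - Z) * phaseChar ζ X)‖ ≤ C)
    (hφ : ContDiff ℝ (⊤ : ℕ∞) φ) (hφc : HasCompactSupport φ) :
    ∃ C : ℝ, ∀ Z ζ : (Fin n → ℝ) × (Fin n → ℝ),
      ‖∫ X, b X * φ (X - Z) * phaseChar ζ X‖ ≤ C := by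
  obtain ⟨C, hC⟩ := hb
  obtain ⟨hint, hinv⟩ := phaseFourier_inversion (f := fun X => φ X * (phaseGaussian X)⁻¹)
    (hφ.mul ((contDiff_phaseGaussian n).inv phaseGaussian_ne_zero)) hφc.mul_right
  set h := phaseFourier (fun X => φ X * (phaseGaussian X)⁻¹) with hh
  refine ⟨∫ w, ‖h w‖ * C, fun Z ζ => ?_⟩
  have hφh (X : (Fin n → ℝ) × (Fin n → ℝ)) :
      φ X = phaseGaussian X * ∫ w, h w * phaseChar ((2 * Real.pi) • w) X := by
    rw [← hinv, mul_comm, mul_assoc, inv_mul_cancel₀ (phaseGaussian_ne_zero X), mul_one]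
  have e1 (X : (Fin n → ℝ) × (Fin n → ℝ)) : b X * φ (X - Z) * phaseChar ζ X =
      ∫ w, (b X * phaseGaussian (X - Z) * h w) *
        (phaseChar ζ X * phaseChar ((2 * Real.pi) • w) (X - Z)) := by
    rw [hφh, ← integral_const_mul, ← integral_const_mul, ← integral_mul_const]
    refine integral_congr_ae (Filter.Eventually.of_forall fun w => ?_)
    simp only
    ring
  have hprod : Integrable (Function.uncurry fun X w : (Fin n → ℝ) × (Fin n → ℝ) =>
      (b X * phaseGaussian (X - Z) * h w) *
        (phaseChar ζ X * phaseChar ((2 * Real.pi) • w) (X - Z))) := by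
    have h1 := (integrable_mul_phaseGaussian hbc hbp Z).mul_prod hint
    exact h1.mul_bdd (c := 1) (continuous_phaseChar_mul ζ Z).aestronglyMeasurable
      (Filter.Eventually.of_forall fun p => by
        rw [norm_mul, norm_phaseChar, norm_phaseChar, one_mul])
  simp_rw [e1]
  rw [integral_integral_swap hprod]
  refine norm_integral_le_of_norm_le (hint.norm.mul_const C)
    (Filter.Eventually.of_forall fun w => ?_)
  have e2 (X : (Fin n → ℝ) × (Fin n → ℝ)) : (b X * phaseGaussian (X - Z) * h w) *
        (phaseChar ζ X * phaseChar ((2 * Real.pi) • w) (X - Z)) =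
      (h w * cexp (I * (-phasePair ((2 * Real.pi) • w) Z : ℝ))) *
        (b X * (phaseGaussian (X - Z) * phaseChar (ζ + (2 * Real.pi) • w) X)) := by
    have : phaseChar ζ X * phaseChar ((2 * Real.pi) • w) (X - Z) =
        cexp (I * (-phasePair ((2 * Real.pi) • w) Z : ℝ)) *
          phaseChar (ζ + (2 * Real.pi) • w) X := by
      simp only [phaseChar, phasePair_sub_right, phasePair_add_left, ← Complex.exp_add]
      congr 1
      push_cast
      ring
    rw [this]; ring
  simp_rw [e2]
  rw [integral_const_mul, norm_mul, norm_mul, norm_cexp_I_mul_ofReal, mul_one]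
  gcongr
  exact hC _ _

section PDeriv

variable {n : ℕ} {f g : (Fin n → ℝ) × (Fin n → ℝ) → ℂ} (i : Fin n ⊕ Fin n)

lemma ContDiff.pDeriv (hf : ContDiff ℝ (⊤ : ℕ∞) f) : ContDiff ℝ (⊤ : ℕ∞) (pDeriv i f) :=
  (hf.fderiv_right (m := (⊤ : ℕ∞)) le_rfl).clm_apply contDiff_const

lemma HasCompactSupport.pDeriv (hf : HasCompactSupport f) : HasCompactSupport (pDeriv i f) :=
  hf.fderiv_apply ℝ _

lemma ContDiff.pDeriv_iterate (hf : ContDiff ℝ (⊤ : ℕ∞) f) (k : ℕ) :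
    ContDiff ℝ (⊤ : ℕ∞) ((_root_.pDeriv i)^[k] f) := by
  induction k with
  | zero => exact hf
  | succ k ih => rw [Function.iterate_succ_apply']; exact ih.pDeriv i

lemma HasCompactSupport.pDeriv_iterate (hf : HasCompactSupport f) (k : ℕ) :
    HasCompactSupport ((_root_.pDeriv i)^[k] f) := by
  induction k with
  | zero => exact hf
  | succ k ih => rw [Function.iterate_succ_apply']; exact ih.pDeriv i

lemma ContDiff.pDerivList (hf : ContDiff ℝ (⊤ : ℕ∞) f) (L : List (Fin n ⊕ Fin n)) :
    ContDiff ℝ (⊤ : ℕ∞) (pDerivList L f) := by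
  induction L with
  | nil => exact hf
  | cons i L ih => exact ih.pDeriv i

lemma pDeriv_add (hf : ContDiff ℝ (⊤ : ℕ∞) f) (hg : ContDiff ℝ (⊤ : ℕ∞) g) :
    pDeriv i (f + g) = pDeriv i f + pDeriv i g := by
  ext z
  simp [pDeriv, fderiv_add (hf.differentiable (by simp) z) (hg.differentiable (by simp) z)]

lemma pDeriv_iterate_add (hf : ContDiff ℝ (⊤ : ℕ∞) f) (hg : ContDiff ℝ (⊤ : ℕ∞) g) (k : ℕ) :
    (pDeriv i)^[k] (f + g) = (pDeriv i)^[k] f + (pDeriv i)^[k] g := by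
  induction k with
  | zero => rfl
  | succ k ih =>
    simp only [Function.iterate_succ_apply', ih]
    exact pDeriv_add i (hf.pDeriv_iterate i k) (hg.pDeriv_iterate i k)

lemma pDeriv_mul_comp_sub (hf : ContDiff ℝ (⊤ : ℕ∞) f) (hg : ContDiff ℝ (⊤ : ℕ∞) g)
    (Z : (Fin n → ℝ) × (Fin n → ℝ)) :
    pDeriv i (fun X => f X * g (X - Z)) =
      (fun X => pDeriv i f X * g (X - Z)) + fun X => f X * pDeriv i g (X - Z) := by
  ext X
  have hg' : DifferentiableAt ℝ (fun X => g (X - Z)) X :=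
    ((hg.comp (contDiff_id.sub contDiff_const)).differentiable (by simp)) X
  simp only [pDeriv, Pi.add_apply]
  rw [fderiv_fun_mul (hf.differentiable (by simp) X) hg', fderiv_comp_sub]
  simp only [_root_.add_apply, _root_.smul_apply, smul_eq_mul]
  ring

lemma pDeriv_phaseChar (ζ X : (Fin n → ℝ) × (Fin n → ℝ)) :
    pDeriv i (phaseChar ζ) X = I * (Sum.elim ζ.1 ζ.2 i : ℝ) * phaseChar ζ X := by
  have hd : DifferentiableAt ℝ (phaseChar ζ) X :=
    (contDiff_phaseChar ζ).differentiable (by simp) X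
  have hζ : phasePair ζ (stdVec i) = Sum.elim ζ.1 ζ.2 i := by
    cases i <;> simp [phasePair, stdVec, dotn, Pi.single_apply]
  have hline (t : ℝ) : phaseChar ζ (X + t • stdVec i) =
      cexp (I * (phasePair ζ X + t * (Sum.elim ζ.1 ζ.2 i : ℝ))) := by
    rw [phaseChar, ← hζ]
    simp only [phasePair, Prod.fst_add, Prod.snd_add, Prod.smul_fst, Prod.smul_snd,
      dotn_add_right, dotn_smul_right]
    push_cast
    ring_nf
  rw [pDeriv, ← hd.lineDeriv_eq_fderiv, lineDeriv]
  simp_rw [hline]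
  have h1 : HasDerivAt (fun t : ℝ => I * (phasePair ζ X + (t : ℂ) * (Sum.elim ζ.1 ζ.2 i : ℝ)))
      (I * (1 * (Sum.elim ζ.1 ζ.2 i : ℝ))) 0 :=
    (((Complex.ofRealCLM.hasDerivAt (x := 0)).mul_const _).const_add _).const_mul I
  rw [h1.cexp.deriv, phaseChar]
  simp [mul_comm]

lemma integral_pDeriv_mul_phaseChar (hf : ContDiff ℝ (⊤ : ℕ∞) f) (hc : HasCompactSupport f)
    (ζ : (Fin n → ℝ) × (Fin n → ℝ)) :
    ∫ X, pDeriv i f X * phaseChar ζ X =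
      -(I * (Sum.elim ζ.1 ζ.2 i : ℝ)) * ∫ X, f X * phaseChar ζ X := by
  have hχ := contDiff_phaseChar ζ
  have h := integral_mul_fderiv_eq_neg_fderiv_mul_of_integrable
    (μ := (volume : Measure ((Fin n → ℝ) × (Fin n → ℝ)))) (f := f) (g := phaseChar ζ)
    (v := stdVec i)
    (((hf.pDeriv i).continuous.mul hχ.continuous).integrable_of_hasCompactSupport
      (hc.pDeriv i).mul_right)
    ((hf.continuous.mul (hχ.pDeriv i).continuous).integrable_of_hasCompactSupport hc.mul_right)
    ((hf.continuous.mul hχ.continuous).integrable_of_hasCompactSupport hc.mul_right)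
    (fun X _ => hf.differentiable (by simp) X) (fun X _ => hχ.differentiable (by simp) X)
  change ∫ X, f X * pDeriv i (phaseChar ζ) X = -∫ X, pDeriv i f X * phaseChar ζ X at h
  simp_rw [pDeriv_phaseChar, mul_left_comm (f _)] at h
  rw [integral_const_mul] at h
  rw [neg_mul, h, neg_neg]

lemma integral_pDeriv_iterate_mul_phaseChar (hf : ContDiff ℝ (⊤ : ℕ∞) f)
    (hc : HasCompactSupport f) (ζ : (Fin n → ℝ) × (Fin n → ℝ)) (k : ℕ) :
    ∫ X, (pDeriv i)^[k] f X * phaseChar ζ X =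
      (-(I * (Sum.elim ζ.1 ζ.2 i : ℝ))) ^ k * ∫ X, f X * phaseChar ζ X := by
  induction k with
  | zero => simp
  | succ k ih =>
    simp only [Function.iterate_succ_apply']
    rw [integral_pDeriv_mul_phaseChar i (hf.pDeriv_iterate i k) (hc.pDeriv_iterate i k), ih]
    ring

end PDeriv

/-- If all localizations `(∂^L a) φ(· - Z)` have uniformly bounded Fourier transforms, then so do
all their derivatives. -/
lemma exists_bound_pDeriv_iterate {n : ℕ} {a : (Fin n → ℝ) × (Fin n → ℝ) → ℂ}
    (ha : ContDiff ℝ (⊤ : ℕ∞) a)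
    (hloc : ∀ (L : List (Fin n ⊕ Fin n)) (φ : (Fin n → ℝ) × (Fin n → ℝ) → ℂ),
      ContDiff ℝ (⊤ : ℕ∞) φ → HasCompactSupport φ → ∃ C : ℝ, ∀ Z ζ,
        ‖∫ X, pDerivList L a X * φ (X - Z) * phaseChar ζ X‖ ≤ C)
    (i : Fin n ⊕ Fin n) (k : ℕ) (L : List (Fin n ⊕ Fin n))
    {φ : (Fin n → ℝ) × (Fin n → ℝ) → ℂ} (hφ : ContDiff ℝ (⊤ : ℕ∞) φ)
    (hφc : HasCompactSupport φ) :
    ∃ C : ℝ, ∀ Z ζ,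
      ‖∫ X, (pDeriv i)^[k] (fun X => pDerivList L a X * φ (X - Z)) X * phaseChar ζ X‖ ≤ C := by
  induction k generalizing L φ with
  | zero => exact hloc L φ hφ hφc
  | succ k ih =>
    obtain ⟨C₁, h₁⟩ := ih (i :: L) hφ hφc
    obtain ⟨C₂, h₂⟩ := ih L (hφ.pDeriv i) (hφc.pDeriv i)
    refine ⟨C₁ + C₂, fun Z ζ => ?_⟩
    have hsm (b ψ : (Fin n → ℝ) × (Fin n → ℝ) → ℂ) (hb : ContDiff ℝ (⊤ : ℕ∞) b)
        (hψ : ContDiff ℝ (⊤ : ℕ∞) ψ) : ContDiff ℝ (⊤ : ℕ∞) fun X => b X * ψ (X - Z) :=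
      hb.mul (hψ.comp (contDiff_id.sub contDiff_const))
    have hcs (b ψ : (Fin n → ℝ) × (Fin n → ℝ) → ℂ) (hψ : HasCompactSupport ψ) :
        HasCompactSupport fun X => b X * ψ (X - Z) :=
      (hψ.comp_homeomorph (Homeomorph.subRight Z)).mul_left
    have hint (b ψ : (Fin n → ℝ) × (Fin n → ℝ) → ℂ) (hb : ContDiff ℝ (⊤ : ℕ∞) b)
        (hψ : ContDiff ℝ (⊤ : ℕ∞) ψ) (hψc : HasCompactSupport ψ) :
        Integrable fun X => (pDeriv i)^[k] (fun X => b X * ψ (X - Z)) X * phaseChar ζ X :=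
      (((hsm b ψ hb hψ).pDeriv_iterate i k).continuous.mul
        (contDiff_phaseChar ζ).continuous).integrable_of_hasCompactSupport
        ((hcs b ψ hψc).pDeriv_iterate i k).mul_right
    have hL := ha.pDerivList L
    have hiL := hL.pDeriv i
    simp only [Function.iterate_succ_apply]
    rw [pDeriv_mul_comp_sub i hL hφ, pDeriv_iterate_add i (hsm _ _ hiL hφ)
      (hsm _ _ hL (hφ.pDeriv i))]
    simp only [Pi.add_apply, add_mul]
    rw [integral_add (hint _ _ hiL hφ hφc) (hint _ _ hL (hφ.pDeriv i) (hφc.pDeriv i))]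
    exact (norm_add_le _ _).trans (add_le_add (h₁ Z ζ) (h₂ Z ζ))

lemma exists_norm_eq_abs_coord {n : ℕ} (hn : 1 ≤ n) (ζ : (Fin n → ℝ) × (Fin n → ℝ)) :
    ∃ i, ‖ζ‖ = |Sum.elim ζ.1 ζ.2 i| := by
  have : Nonempty (Fin n) := ⟨⟨0, hn⟩⟩
  have hpi (x : Fin n → ℝ) : ∃ j, ‖x‖ = |x j| := by
    obtain ⟨j, hj⟩ := Finite.exists_max fun j => |x j|
    exact ⟨j, le_antisymm ((pi_norm_le_iff_of_nonneg (abs_nonneg _)).2 hj) (norm_le_pi_norm x j)⟩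
  rw [Prod.norm_def]
  rcases max_choice ‖ζ.1‖ ‖ζ.2‖ with h | h
  · obtain ⟨j, hj⟩ := hpi ζ.1
    exact ⟨Sum.inl j, h.trans hj⟩
  · obtain ⟨j, hj⟩ := hpi ζ.2
    exact ⟨Sum.inr j, h.trans hj⟩

lemma exists_bound_of_localizations {n : ℕ} (hn : 1 ≤ n)
    {a : (Fin n → ℝ) × (Fin n → ℝ) → ℂ} (ha : ContDiff ℝ (⊤ : ℕ∞) a)
    (hloc : ∀ (L : List (Fin n ⊕ Fin n)) (φ : (Fin n → ℝ) × (Fin n → ℝ) → ℂ),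
      ContDiff ℝ (⊤ : ℕ∞) φ → HasCompactSupport φ → ∃ C : ℝ, ∀ Z ζ,
        ‖∫ X, pDerivList L a X * φ (X - Z) * phaseChar ζ X‖ ≤ C)
    (L : List (Fin n ⊕ Fin n)) : ∃ M : ℝ, ∀ z, ‖pDerivList L a z‖ ≤ M := by
  obtain ⟨φ, hφc, hφ, hφ1⟩ : ∃ φ : (Fin n → ℝ) × (Fin n → ℝ) → ℂ, HasCompactSupport φ ∧
      ContDiff ℝ (⊤ : ℕ∞) φ ∧ φ 0 = 1 := by
    let χ : ContDiffBump (0 : (Fin n → ℝ) × (Fin n → ℝ)) := default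
    refine ⟨fun X => (χ X : ℂ), χ.hasCompactSupport.comp_left Complex.ofReal_zero,
      Complex.ofRealCLM.contDiff.comp χ.contDiff, ?_⟩
    simp [χ.one_of_mem_closedBall (Metric.mem_closedBall_self χ.rIn_pos.le)]
  set N := (volume : Measure ((Fin n → ℝ) × (Fin n → ℝ))).integrablePower with hN
  obtain ⟨C₀, hC₀⟩ := hloc L φ hφ hφc
  choose D hD using fun i => exists_bound_pDeriv_iterate ha hloc i N L hφ hφc
  have hD0 (i) : 0 ≤ D i := (norm_nonneg _).trans (hD i 0 0)
  set F := fun Z X : (Fin n → ℝ) × (Fin n → ℝ) => pDerivList L a X * φ (X - Z) with hF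
  have hFs (Z) : ContDiff ℝ (⊤ : ℕ∞) (F Z) :=
    (ha.pDerivList L).mul (hφ.comp (contDiff_id.sub contDiff_const))
  have hFc (Z) : HasCompactSupport (F Z) :=
    (hφc.comp_homeomorph (Homeomorph.subRight Z)).mul_left
  have hb₁ (Z w) : ‖phaseFourier (F Z) w‖ ≤ C₀ := hC₀ Z _
  have hb₂ (Z w) : ‖w‖ ^ (0 + N) * ‖phaseFourier (F Z) w‖ ≤ ∑ i, D i := by
    obtain ⟨i, hi⟩ := exists_norm_eq_abs_coord hn (-(2 * Real.pi) • w)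
    have h := hD i Z (-(2 * Real.pi) • w)
    rw [integral_pDeriv_iterate_mul_phaseChar i (hFs Z) (hFc Z), norm_mul, norm_pow, norm_neg,
      norm_mul, Complex.norm_I, one_mul, Complex.norm_real, Real.norm_eq_abs, ← hi] at h
    have hw : ‖w‖ ≤ ‖-(2 * Real.pi) • w‖ := by
      rw [norm_smul, norm_neg, Real.norm_eq_abs, abs_of_pos (by positivity)]
      nlinarith [norm_nonneg w, Real.pi_gt_three]
    calc ‖w‖ ^ (0 + N) * ‖phaseFourier (F Z) w‖
        ≤ ‖-(2 * Real.pi) • w‖ ^ N * ‖phaseFourier (F Z) w‖ := by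
          rw [zero_add]; gcongr
      _ ≤ D i := h
      _ ≤ ∑ i, D i := Finset.single_le_sum (fun i _ => hD0 i) (Finset.mem_univ i)
  refine ⟨_, fun Z => le_trans ?_ (integral_pow_mul_le_of_le_of_pow_mul_le
    (μ := (volume : Measure ((Fin n → ℝ) × (Fin n → ℝ)))) (k := 0) (hb₁ Z) (hb₂ Z))⟩
  have hinv := (phaseFourier_inversion (hFs Z) (hFc Z)).2 Z
  have hZ : F Z Z = pDerivList L a Z := by simp [hF, hφ1]
  rw [← hZ, hinv]
  refine (norm_integral_le_integral_norm _).trans_eq ?_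
  simp only [norm_mul, norm_phaseChar, mul_one, pow_zero, one_mul]

/-- Beals-type converse: if `a : ℝ^{2n} → ℂ` is smooth with polynomially bounded
partial derivatives, and for every multi-index `α` the Weyl operator
`Op(∂^α a)` is bounded on `L²(ℝⁿ)` (i.e. `|∫ (∂^α a) · W(u,v)| ≤ C_α ‖u‖ ‖v‖`),
then every partial derivative `∂^α a` is bounded on `ℝ^{2n}`. -/
theorem beals_converse (n : ℕ) (hn : 1 ≤ n)
    (a : (Fin n → ℝ) × (Fin n → ℝ) → ℂ) (ha : ContDiff ℝ (⊤ : ℕ∞) a)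
    (hpoly : ∀ L : List (Fin n ⊕ Fin n), ∃ (C : ℝ) (m : ℕ),
      ∀ z, ‖pDerivList L a z‖ ≤ C * (1 + ‖z‖) ^ m)
    (hOp : ∀ L : List (Fin n ⊕ Fin n), ∃ C > (0 : ℝ),
      ∀ u v : SchwartzMap (Fin n → ℝ) ℂ,
        ‖∫ z : (Fin n → ℝ) × (Fin n → ℝ), pDerivList L a z * wigner u v z‖ ≤
          C * Real.sqrt (∫ x : Fin n → ℝ, ‖u x‖ ^ 2) *
            Real.sqrt (∫ x : Fin n → ℝ, ‖v x‖ ^ 2)) :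
    ∀ L : List (Fin n ⊕ Fin n), ∃ M : ℝ, ∀ z, ‖pDerivList L a z‖ ≤ M := by
  refine exists_bound_of_localizations hn ha fun L φ hφ hφc => ?_
  exact exists_bound_integral_testFunction (ha.pDerivList L).continuous (hpoly L)
    (exists_bound_integral_phaseGaussian (hOp L)) hφ hφc
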